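/- arXiv:math/0007060 — 2 statements merged into one kernel-verified Lean document; each statement's English description precedes it below -/
import Mathlib

section
/- Let X^i_α : ℝ^p × ℝ^n → ℝ and c : ℝ^p × ℝ^n → ℝ be smooth. A smooth map x : ℝ^p → ℝ^n is an extremal of the Lagrangian L = (½ h^{αβ} g_{ij} x^i_α x^j_β − h^{αβ} g_{ij} x^i_α X^j_β + c) √|det h| if and only if it satisfies the generalized Poisson (potential map) equations h^{αβ} x^i_{αβ} = g^{ij} ∂c/∂x^j + h^{αβ} (∇_k X^i_β − g_{kj} g^{il} ∇_l X^j_β) x^k_α + h^{αβ} D_α X^i_β, where all quantities depending on (t,x) are evaluated at (t, x(t)). -/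
/-!
For every `t` and `k`, the `k`-th Euler–Lagrange expression equals
`√|det h| · g_{ki} (RHS^i − LHS^i)`, where `LHS^i = RHS^i` is the `i`-th Poisson equation. The
equivalence follows since `√|det h|` is positive and `g` is invertible.

The momenta are `∂L/∂x^k_α = √|det h| h^{αβ} W_β` with `W_β = g_{kj} (x^j_β − X^j_β)`
(`fderiv_lagrangian_jet`). Jacobi's formula (`hasFDerivAt_det`) and the derivative of the inverse
matrix (`pd_minv`) give `∂_α(√|det h| h^{αβ}) = −√|det h| h^{αγ} H^β_{αγ}`
(`sum_pd_sqrtDet_mul_minv`), so the divergence of the momenta is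
`√|det h| h^{αβ} (∂_α W_β − H^γ_{αβ} W_γ)`. On the Poisson side, lowering the index with `g` turns
the Christoffel symbols of `g` into first derivatives of `g`; the lowered force term becomes
`∂_m(g_{ks} X^s_β) − ∂_k(g_{ms} X^s_β)` (`sum_mul_force`). The two sides then agree up to a term
antisymmetric in `α, β`, which the symmetric `h^{αβ}` annihilates (`euler_lagrange_algebra`).
-/

open scoped BigOperators

noncomputable section

/-- Partial derivative of `f : ℝ^m → ℝ` at `t` in the `α`-th coordinate direction. -/
def pd {m : ℕ} (α : Fin m) (f : (Fin m → ℝ) → ℝ) (t : Fin m → ℝ) : ℝ :=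
  fderiv ℝ f t (Pi.single α 1)

/-- Componentwise inverse of a square array of reals (matrix inversion). -/
def minv {m : ℕ} (A : Fin m → Fin m → ℝ) : Fin m → Fin m → ℝ :=
  fun i j => (Matrix.of A)⁻¹ i j

/-- `√|det h(t)|`, the volume density of the metric `h`. -/
def sqrtDet {p : ℕ} (h : (Fin p → ℝ) → Fin p → Fin p → ℝ) (t : Fin p → ℝ) : ℝ :=
  Real.sqrt |(Matrix.of (h t)).det|

/-- First jet `x^i_α = ∂x^i/∂t^α` of a map `x : ℝ^p → ℝ^n`. -/
def jet {p n : ℕ} (x : (Fin p → ℝ) → Fin n → ℝ) (t : Fin p → ℝ) :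
    Fin n → Fin p → ℝ :=
  fun i α => pd α (fun s => x s i) t

/-- Christoffel symbols `G^i_{jk} = ½ g^{il}(∂g_{lj}/∂x^k + ∂g_{lk}/∂x^j − ∂g_{jk}/∂x^l)`. -/
def christoffel {m : ℕ} (g : (Fin m → ℝ) → Fin m → Fin m → ℝ)
    (i j k : Fin m) (q : Fin m → ℝ) : ℝ :=
  (1 / 2) * ∑ l, minv (g q) i l *
    (pd k (fun y => g y l j) q + pd j (fun y => g y l k) q - pd l (fun y => g y j k) q)

/-- Covariant second jet
`x^i_{αβ} = ∂²x^i/∂t^α∂t^β − H^γ_{αβ} x^i_γ + G^i_{jk} x^j_α x^k_β`. -/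
def covHess {p n : ℕ} (h : (Fin p → ℝ) → Fin p → Fin p → ℝ)
    (g : (Fin n → ℝ) → Fin n → Fin n → ℝ)
    (x : (Fin p → ℝ) → Fin n → ℝ) (i : Fin n) (α β : Fin p) (t : Fin p → ℝ) : ℝ :=
  pd α (fun s => jet x s i β) t
    - (∑ γ, christoffel h γ α β t * jet x t i γ)
    + ∑ j, ∑ k, christoffel g i j k (x t) * jet x t j α * jet x t k β

/-- `∇_j X^i_α = ∂X^i_α/∂x^j + G^i_{jk} X^k_α`. -/
def nablaX {p n : ℕ} (g : (Fin n → ℝ) → Fin n → Fin n → ℝ)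
    (X : Fin n → Fin p → (Fin p → ℝ) → (Fin n → ℝ) → ℝ)
    (j i : Fin n) (α : Fin p) (t : Fin p → ℝ) (q : Fin n → ℝ) : ℝ :=
  pd j (fun y => X i α t y) q + ∑ k, christoffel g i j k q * X k α t q

/-- `D_β X^i_α = ∂X^i_α/∂t^β − H^γ_{βα} X^i_γ`. -/
def Dt {p n : ℕ} (h : (Fin p → ℝ) → Fin p → Fin p → ℝ)
    (X : Fin n → Fin p → (Fin p → ℝ) → (Fin n → ℝ) → ℝ)
    (β : Fin p) (i : Fin n) (α : Fin p) (t : Fin p → ℝ) (q : Fin n → ℝ) : ℝ :=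
  pd β (fun s => X i α s q) t - ∑ γ, christoffel h γ β α t * X i γ t q

/-- External tensor `F_j{}^i{}_α = ∇_j X^i_α − g_{hj} g^{ik} ∇_k X^h_α`. -/
def Fext {p n : ℕ} (g : (Fin n → ℝ) → Fin n → Fin n → ℝ)
    (X : Fin n → Fin p → (Fin p → ℝ) → (Fin n → ℝ) → ℝ)
    (j i : Fin n) (α : Fin p) (t : Fin p → ℝ) (q : Fin n → ℝ) : ℝ :=
  nablaX g X j i α t q
    - ∑ h', ∑ k, g q h' j * minv (g q) i k * nablaX g X k h' α t q

/-- Potential energy `f = ½ h^{αβ} g_{ij} X^i_α X^j_β`. -/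
def potE {p n : ℕ} (h : (Fin p → ℝ) → Fin p → Fin p → ℝ)
    (g : (Fin n → ℝ) → Fin n → Fin n → ℝ)
    (X : Fin n → Fin p → (Fin p → ℝ) → (Fin n → ℝ) → ℝ)
    (t : Fin p → ℝ) (q : Fin n → ℝ) : ℝ :=
  (1 / 2) * ∑ α, ∑ β, ∑ i, ∑ j, minv (h t) α β * g q i j * X i α t q * X j β t q

/-- A map `x` is an extremal of the first-order Lagrangian `L = L(t, x, x_·)` iff it
satisfies the Euler–Lagrange equations
`∂L/∂x^k − (d/dt^α)(∂L/∂x^k_α) = 0` along the first jet of `x`. -/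
def IsExtremal {p n : ℕ}
    (L : (Fin p → ℝ) → (Fin n → ℝ) → (Fin n → Fin p → ℝ) → ℝ)
    (x : (Fin p → ℝ) → Fin n → ℝ) : Prop :=
  ∀ (t : Fin p → ℝ) (k : Fin n),
    fderiv ℝ (fun q => L t q (jet x t)) (x t) (Pi.single k 1)
      - (∑ α, pd α
          (fun s => fderiv ℝ (fun v => L s (x s) v) (jet x s)
            (Pi.single k (Pi.single α 1))) t) = 0

/-! ### Determinant, inverse metric and volume density -/

/-- Jacobi's formula for a determinant whose entries depend on a parameter. -/
theorem hasFDerivAt_det {E : Type*} [NormedAddCommGroup E] [NormedSpace ℝ E] {m : ℕ}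
    (A : E → Fin m → Fin m → ℝ) (t : E)
    (hA : ∀ i j, DifferentiableAt ℝ (fun s => A s i j) t) :
    DifferentiableAt ℝ (fun s => (Matrix.of (A s)).det) t ∧
    ∀ w, fderiv ℝ (fun s => (Matrix.of (A s)).det) t w =
      ∑ i, ∑ j, (Matrix.of (A t)).adjugate j i * fderiv ℝ (fun s => A s i j) t w := by
  let D : ContinuousMultilinearMap ℝ (fun _ : Fin m => Fin m → ℝ) ℝ :=
    { (Matrix.detRowAlternating (n := Fin m) (R := ℝ)).toMultilinearMap with
      cont := by
        change Continuous fun M : Matrix (Fin m) (Fin m) ℝ => M.det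
        exact Continuous.matrix_det continuous_id }
  have h1 : HasFDerivAt A (ContinuousLinearMap.pi fun i => ContinuousLinearMap.pi fun j =>
      fderiv ℝ (fun s => A s i j) t) t := by
    rw [hasFDerivAt_pi]
    intro i
    rw [hasFDerivAt_pi]
    intro j
    exact (hA i j).hasFDerivAt
  have h2 := (D.hasFDerivAt (A t)).comp t h1
  have h3 : (D ∘ A) = fun s => (Matrix.of (A s)).det := rfl
  rw [h3] at h2
  refine ⟨h2.differentiableAt, fun w => ?_⟩
  rw [h2.fderiv]
  simp only [ContinuousLinearMap.comp_apply, ContinuousMultilinearMap.linearDeriv_apply]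
  refine Finset.sum_congr rfl fun i _ => ?_
  change ((Matrix.of (A t)).updateRow i _).det = _
  rw [← Matrix.cramer_transpose_apply, Matrix.cramer_eq_adjugate_mulVec,
    ← Matrix.adjugate_transpose]
  simp [Matrix.mulVec, dotProduct, Matrix.transpose_apply]

theorem differentiableAt_minv {E : Type*} [NormedAddCommGroup E] [NormedSpace ℝ E] {m : ℕ}
    (A : E → Fin m → Fin m → ℝ) (t : E)
    (hA : ∀ i j, DifferentiableAt ℝ (fun s => A s i j) t)
    (hdet : (Matrix.of (A t)).det ≠ 0) (i j : Fin m) :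
    DifferentiableAt ℝ (fun s => minv (A s) i j) t := by
  have h1 : (fun s => minv (A s) i j) = fun s => ((Matrix.of (A s)).det)⁻¹ *
      (Matrix.of ((Matrix.of (A s)).updateRow j (Pi.single i 1))).det := by
    funext s
    simp only [minv, Matrix.inv_def, Matrix.smul_apply, smul_eq_mul, Ring.inverse_eq_inv',
      Matrix.adjugate_apply]
    rfl
  rw [h1]
  refine ((hasFDerivAt_det A t hA).1.inv hdet).mul (hasFDerivAt_det _ t fun a b => ?_).1
  by_cases hab : a = j
  · subst hab
    simp
  · simpa [Matrix.updateRow_apply, hab] using hA a b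

theorem minv_mul {m : ℕ} (A : Fin m → Fin m → ℝ) (hdet : (Matrix.of A).det ≠ 0) (i j : Fin m) :
    ∑ k, minv A i k * A k j = if i = j then 1 else 0 := by
  have := Matrix.nonsing_inv_mul (Matrix.of A) (isUnit_iff_ne_zero.mpr hdet)
  have := congrFun (congrFun this i) j
  simpa [Matrix.mul_apply, Matrix.one_apply, minv] using this

theorem mul_minv {m : ℕ} (A : Fin m → Fin m → ℝ) (hdet : (Matrix.of A).det ≠ 0) (i j : Fin m) :
    ∑ k, A i k * minv A k j = if i = j then 1 else 0 := by
  have := Matrix.mul_nonsing_inv (Matrix.of A) (isUnit_iff_ne_zero.mpr hdet)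
  have := congrFun (congrFun this i) j
  simpa [Matrix.mul_apply, Matrix.one_apply, minv] using this

theorem minv_symm {m : ℕ} (A : Fin m → Fin m → ℝ) (hA : ∀ i j, A i j = A j i) (i j : Fin m) :
    minv A i j = minv A j i := by
  have h1 : (Matrix.of A).transpose = Matrix.of A := by
    ext a b; exact hA b a
  have := Matrix.transpose_nonsing_inv (Matrix.of A)
  rw [h1] at this
  exact congrFun (congrFun this j) i

theorem sqrtDet_pos {p : ℕ} (h : (Fin p → ℝ) → Fin p → Fin p → ℝ) (t : Fin p → ℝ)
    (hdet : (Matrix.of (h t)).det ≠ 0) : 0 < sqrtDet h t :=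
  Real.sqrt_pos.mpr (abs_pos.mpr hdet)

/-- Logarithmic derivative of the volume density:
`∂√|det h| = ½ √|det h| h^{λμ} ∂h_{μλ}`. -/
theorem pd_sqrtDet {p : ℕ} (h : (Fin p → ℝ) → Fin p → Fin p → ℝ) (t : Fin p → ℝ)
    (hh : ∀ α β, DifferentiableAt ℝ (fun s => h s α β) t)
    (hdet : (Matrix.of (h t)).det ≠ 0) :
    DifferentiableAt ℝ (sqrtDet h) t ∧ ∀ α, pd α (sqrtDet h) t =
      (1 / 2) * sqrtDet h t * ∑ l, ∑ m, minv (h t) m l * pd α (fun s => h s l m) t := by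
  obtain ⟨hd, hd'⟩ := hasFDerivAt_det h t hh
  have habs : HasFDerivAt (fun s => |(Matrix.of (h s)).det|) _ t := hd.hasFDerivAt.abs hdet
  have hsq : HasFDerivAt (sqrtDet h) _ t := habs.sqrt (abs_ne_zero.mpr hdet)
  refine ⟨hsq.differentiableAt, fun α => ?_⟩
  rw [pd, hsq.fderiv]
  simp only [smul_apply, smul_eq_mul, hd']
  simp only [minv, Matrix.inv_def, Matrix.smul_apply, smul_eq_mul, Ring.inverse_eq_inv', pd,
    mul_assoc, ← Finset.mul_sum]
  change 1 / (2 * sqrtDet h t) * _ = _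
  have hS := sqrtDet_pos h t hdet
  have hS2 : sqrtDet h t * sqrtDet h t = |(Matrix.of (h t)).det| :=
    Real.mul_self_sqrt (abs_nonneg _)
  have hs : |(Matrix.of (h t)).det| = SignType.sign (Matrix.of (h t)).det * (Matrix.of (h t)).det :=
    (sign_mul_self _).symm
  rw [hs] at hS2
  rw [← mul_assoc, ← mul_assoc, ← mul_assoc]
  congr 1
  have hs' : (SignType.sign (Matrix.of (h t)).det : ℝ) =
      sqrtDet h t * sqrtDet h t / (Matrix.of (h t)).det := by
    rw [hS2, mul_div_cancel_right₀ _ hdet]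
  rw [hs']
  field_simp

theorem pd_mul {m : ℕ} {α : Fin m} {f k : (Fin m → ℝ) → ℝ} {t : Fin m → ℝ}
    (hf : DifferentiableAt ℝ f t) (hk : DifferentiableAt ℝ k t) :
    pd α (fun s => f s * k s) t = pd α f t * k t + f t * pd α k t := by
  simp only [pd, fderiv_fun_mul hf hk]
  simp
  ring

theorem pd_add {m : ℕ} {α : Fin m} {f k : (Fin m → ℝ) → ℝ} {t : Fin m → ℝ}
    (hf : DifferentiableAt ℝ f t) (hk : DifferentiableAt ℝ k t) :
    pd α (fun s => f s + k s) t = pd α f t + pd α k t := by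
  simp [pd, fderiv_fun_add hf hk]

theorem pd_sub {m : ℕ} {α : Fin m} {f k : (Fin m → ℝ) → ℝ} {t : Fin m → ℝ}
    (hf : DifferentiableAt ℝ f t) (hk : DifferentiableAt ℝ k t) :
    pd α (fun s => f s - k s) t = pd α f t - pd α k t := by
  simp [pd, fderiv_fun_sub hf hk]

theorem pd_sum {m : ℕ} {ι : Type*} {u : Finset ι} {α : Fin m} {f : ι → (Fin m → ℝ) → ℝ}
    {t : Fin m → ℝ} (hf : ∀ i ∈ u, DifferentiableAt ℝ (f i) t) :
    pd α (fun s => ∑ i ∈ u, f i s) t = ∑ i ∈ u, pd α (f i) t := by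
  simp [pd, fderiv_fun_sum hf]

/-- Derivative of the inverse metric: `∂h^{αβ} = -h^{αλ} ∂h_{λμ} h^{μβ}`. -/
theorem pd_minv {p : ℕ} (h : (Fin p → ℝ) → Fin p → Fin p → ℝ) (t : Fin p → ℝ)
    (hh : ∀ α β, DifferentiableAt ℝ (fun s => h s α β) t)
    (hdet : ∀ t, (Matrix.of (h t)).det ≠ 0) (γ α β : Fin p) :
    pd γ (fun s => minv (h s) α β) t =
      - ∑ l, ∑ m, minv (h t) α l * pd γ (fun s => h s l m) t * minv (h t) m β := by
  have hm := fun a b => differentiableAt_minv h t hh (hdet t) a b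
  have key : ∀ m, ∑ l, (pd γ (fun s => minv (h s) α l) t * h t l m +
      minv (h t) α l * pd γ (fun s => h s l m) t) = 0 := by
    intro m
    have h1 : (fun s => ∑ l, minv (h s) α l * h s l m) = fun _ => if α = m then 1 else 0 := by
      funext s
      exact minv_mul (h s) (hdet s) α m
    have h2 := pd_sum (u := Finset.univ) (α := γ) (t := t)
      (f := fun l s => minv (h s) α l * h s l m) (fun l _ => (hm α l).mul (hh l m))
    rw [h1] at h2
    simp only [pd_mul (hm α _) (hh _ m)] at h2
    rw [← h2]
    simp [pd]
  have e1 : pd γ (fun s => minv (h s) α β) t =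
      ∑ l, pd γ (fun s => minv (h s) α l) t * ∑ m, h t l m * minv (h t) m β := by
    simp [mul_minv _ (hdet t)]
  rw [e1, eq_neg_iff_add_eq_zero]
  have e2 : ∑ m, (∑ l, (pd γ (fun s => minv (h s) α l) t * h t l m +
      minv (h t) α l * pd γ (fun s => h s l m) t)) * minv (h t) m β = 0 := by
    simp [key]
  rw [← e2]
  simp only [Finset.mul_sum, Finset.sum_mul, Finset.sum_add_distrib, add_mul]
  congr 1
  · rw [Finset.sum_comm]
    simp only [mul_assoc]
  · rw [Finset.sum_comm]

/-- Divergence of the densitized inverse metric: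
`∂_α(√|det h| h^{αβ}) = -√|det h| h^{αγ} H^β_{αγ}`. -/
theorem sum_pd_sqrtDet_mul_minv {p : ℕ} (h : (Fin p → ℝ) → Fin p → Fin p → ℝ) (t : Fin p → ℝ)
    (hsymm : ∀ t α β, h t α β = h t β α)
    (hh : ∀ α β, DifferentiableAt ℝ (fun s => h s α β) t)
    (hdet : ∀ t, (Matrix.of (h t)).det ≠ 0) (β : Fin p) :
    ∑ α, pd α (fun s => sqrtDet h s * minv (h s) α β) t =
      -(sqrtDet h t * ∑ α, ∑ γ, minv (h t) α γ * christoffel h β α γ t) := by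
  obtain ⟨hS, hS'⟩ := pd_sqrtDet h t hh (hdet t)
  have hm := fun a b => differentiableAt_minv h t hh (hdet t) a b
  have hd : ∀ α l m, pd α (fun s => h s l m) t = pd α (fun s => h s m l) t := by
    intro α l m
    simp only [hsymm _ l m]
  have ha := minv_symm (h t) (hsymm t)
  simp only [pd_mul hS (hm _ β), hS', pd_minv h t hh hdet, christoffel]
  generalize minv (h t) = a at *
  generalize sqrtDet h t = S at *
  -- From here on only the symmetries of `a = h⁻¹` and `d α l m = ∂_α h_{lm}` matter.
  set d : Fin p → Fin p → Fin p → ℝ := fun α l m => pd α (fun s => h s l m) t with hddef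
  have hd' : ∀ α l m, d α l m = d α m l := hd
  change ∑ α, (1 / 2 * S * (∑ l, ∑ m, a m l * d α l m) * a α β +
    S * -∑ l, ∑ m, a α l * d α l m * a m β) =
    -(S * ∑ α, ∑ γ, a α γ * (1 / 2 * ∑ l, a β l * (d γ l α + d α l γ - d l α γ)))
  have e1 : ∑ α, ∑ l, ∑ m, a α l * d α l m * a m β = ∑ α, ∑ γ, a α γ * ∑ l, a β l * d α l γ := by
    simp only [Finset.mul_sum]
    refine Finset.sum_congr rfl fun α _ => Finset.sum_congr rfl fun γ _ =>
      Finset.sum_congr rfl fun l _ => ?_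
    rw [ha l β, hd' α γ l]; ring
  have e2 : ∑ α, ∑ γ, a α γ * ∑ l, a β l * d γ l α = ∑ α, ∑ γ, a α γ * ∑ l, a β l * d α l γ := by
    rw [Finset.sum_comm]
    refine Finset.sum_congr rfl fun α _ => Finset.sum_congr rfl fun γ _ => ?_
    rw [ha]
  have e3 : ∑ α, (∑ l, ∑ m, a m l * d α l m) * a α β =
      ∑ α, ∑ γ, a α γ * ∑ l, a β l * d l α γ := by
    simp only [Finset.mul_sum, Finset.sum_mul]
    rw [Finset.sum_comm]
    refine Finset.sum_congr rfl fun α _ => ?_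
    rw [Finset.sum_comm]
    refine Finset.sum_congr rfl fun γ _ => Finset.sum_congr rfl fun l _ => ?_
    rw [ha l β, ha γ α]; ring
  have e4 : ∑ α, ∑ γ, a α γ * (1 / 2 * ∑ l, a β l * (d γ l α + d α l γ - d l α γ)) =
      1 / 2 * (∑ α, ∑ γ, a α γ * ∑ l, a β l * d γ l α +
        ∑ α, ∑ γ, a α γ * ∑ l, a β l * d α l γ - ∑ α, ∑ γ, a α γ * ∑ l, a β l * d l α γ) := by
    simp only [← Finset.sum_add_distrib, ← Finset.sum_sub_distrib, Finset.mul_sum]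
    refine Finset.sum_congr rfl fun α _ => Finset.sum_congr rfl fun γ _ =>
      Finset.sum_congr rfl fun l _ => ?_
    ring
  have e5 : ∑ α, (1 / 2 * S * (∑ l, ∑ m, a m l * d α l m) * a α β +
      S * -∑ l, ∑ m, a α l * d α l m * a m β) =
      1 / 2 * S * (∑ α, (∑ l, ∑ m, a m l * d α l m) * a α β) -
        S * ∑ α, ∑ l, ∑ m, a α l * d α l m * a m β := by
    rw [Finset.mul_sum, Finset.mul_sum, ← Finset.sum_sub_distrib]
    exact Finset.sum_congr rfl fun α _ => by ring
  rw [e5, e4, e1, e2, e3]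
  ring

/-! ### Derivatives of the Lagrangian -/

/-- Chain rule along the graph of `x`. -/
theorem pd_graph {p n : ℕ} (F : (Fin p → ℝ) → (Fin n → ℝ) → ℝ) (x : (Fin p → ℝ) → Fin n → ℝ)
    (t : Fin p → ℝ)
    (hF : DifferentiableAt ℝ (fun z : (Fin p → ℝ) × (Fin n → ℝ) => F z.1 z.2) (t, x t))
    (hx : DifferentiableAt ℝ x t) (α : Fin p) :
    pd α (fun s => F s (x s)) t = pd α (fun s => F s (x t)) t +
      ∑ l, pd l (fun y => F t y) (x t) * jet x t l α := by
  set F' := fderiv ℝ (fun z : (Fin p → ℝ) × (Fin n → ℝ) => F z.1 z.2) (t, x t) 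
  have h1 : HasFDerivAt (fun s => F s (x s))
      (F'.comp ((ContinuousLinearMap.id ℝ (Fin p → ℝ)).prod (fderiv ℝ x t))) t :=
    HasFDerivAt.comp (f := fun s => (s, x s)) t hF.hasFDerivAt
      ((hasFDerivAt_id t).prodMk hx.hasFDerivAt)
  have h2 : HasFDerivAt (fun s => F s (x t))
      (F'.comp ((ContinuousLinearMap.id ℝ (Fin p → ℝ)).prod 0)) t :=
    HasFDerivAt.comp (f := fun s => (s, x t)) t hF.hasFDerivAt
      ((hasFDerivAt_id t).prodMk (hasFDerivAt_const (x t) t))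
  have h3 : HasFDerivAt (fun y => F t y)
      (F'.comp (ContinuousLinearMap.prod 0 (ContinuousLinearMap.id ℝ (Fin n → ℝ)))) (x t) :=
    HasFDerivAt.comp (f := fun y => (t, y)) (x t) hF.hasFDerivAt
      ((hasFDerivAt_const t (x t)).prodMk (hasFDerivAt_id (x t)))
  have h4 : ∀ l, jet x t l α = fderiv ℝ x t (Pi.single α 1) l := by
    intro l
    simp only [jet, pd]
    rw [fderiv_apply hx l]
    rfl
  simp only [h4]
  simp only [pd, h1.fderiv, h2.fderiv, h3.fderiv]
  simp only [ContinuousLinearMap.comp_apply, ContinuousLinearMap.prod_apply,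
    zero_apply, ContinuousLinearMap.id_apply]
  generalize fderiv ℝ x t (Pi.single α 1) = w
  have h5 : ∑ l, F' (0, Pi.single l 1) * w l = F' (0, w) := by
    have : w = ∑ l, w l • (Pi.single l 1 : Fin n → ℝ) := by
      funext j
      simp [Finset.sum_apply, Pi.single_apply]
    conv_rhs => rw [this]
    have e : ((0 : Fin p → ℝ), ∑ l, w l • (Pi.single l 1 : Fin n → ℝ)) =
        ∑ l, w l • ((0 : Fin p → ℝ), (Pi.single l 1 : Fin n → ℝ)) := by
      ext <;> simp [Prod.fst_sum, Prod.snd_sum]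
    rw [e, map_sum]
    simp only [map_smul, smul_eq_mul, mul_comm]
  rw [h5, ← map_add]
  simp

/-- `∂L/∂x^k` for the general energy Lagrangian. -/
theorem pd_lagrangian {p n : ℕ} (a : Fin p → Fin p → ℝ) (v : Fin n → Fin p → ℝ) (S : ℝ)
    (u : Fin n → Fin n → (Fin n → ℝ) → ℝ) (y : Fin n → Fin p → (Fin n → ℝ) → ℝ)
    (c : (Fin n → ℝ) → ℝ) (q : Fin n → ℝ)
    (hu : ∀ i j, DifferentiableAt ℝ (u i j) q) (hy : ∀ i j, DifferentiableAt ℝ (y i j) q)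
    (hc : DifferentiableAt ℝ c q) (k : Fin n) :
    pd k (fun q => ((1 / 2) * (∑ α, ∑ β, ∑ i, ∑ j, a α β * u i j q * v i α * v j β)
        - (∑ α, ∑ β, ∑ i, ∑ j, a α β * u i j q * v i α * y j β q) + c q) * S) q =
      ((1 / 2) * (∑ α, ∑ β, ∑ i, ∑ j, a α β * pd k (u i j) q * v i α * v j β)
        - (∑ α, ∑ β, ∑ i, ∑ j, a α β * v i α *
            (pd k (u i j) q * y j β q + u i j q * pd k (y j β) q)) + pd k c q) * S := by
  have h0 : ∀ r : ℝ, pd k (fun _ : Fin n → ℝ => r) q = 0 := fun r => by simp [pd]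
  simp (disch := (intros; fun_prop)) only [pd_mul, pd_add, pd_sub, pd_sum, h0]
  simp only [zero_mul, mul_zero, zero_add, add_zero]
  congr 3
  refine Finset.sum_congr rfl fun α _ => Finset.sum_congr rfl fun β _ =>
    Finset.sum_congr rfl fun i _ => Finset.sum_congr rfl fun j _ => ?_
  ring

/-- `∂L/∂x^k_α` for the general energy Lagrangian. -/
theorem fderiv_lagrangian_jet {p n : ℕ} (a : Fin p → Fin p → ℝ) (G : Fin n → Fin n → ℝ)
    (ha : ∀ α β, a α β = a β α) (hG : ∀ i j, G i j = G j i)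
    (Y : Fin n → Fin p → ℝ) (c S : ℝ) (v : Fin n → Fin p → ℝ) (k : Fin n) (γ : Fin p) :
    fderiv ℝ (fun v : Fin n → Fin p → ℝ =>
      ((1 / 2) * (∑ α, ∑ β, ∑ i, ∑ j, a α β * G i j * v i α * v j β)
        - (∑ α, ∑ β, ∑ i, ∑ j, a α β * G i j * v i α * Y j β) + c) * S) v
        (Pi.single k (Pi.single γ 1)) =
      ∑ β, (S * a γ β) * ∑ j, G k j * (v j β - Y j β) := by
  have hv : ∀ i α, HasFDerivAt (fun v : Fin n → Fin p → ℝ => v i α)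
      ((ContinuousLinearMap.proj α : (Fin p → ℝ) →L[ℝ] ℝ).comp
        (ContinuousLinearMap.proj i : (Fin n → Fin p → ℝ) →L[ℝ] (Fin p → ℝ))) v := by
    intro i α
    exact ((ContinuousLinearMap.proj α : (Fin p → ℝ) →L[ℝ] ℝ).comp
      (ContinuousLinearMap.proj i : (Fin n → Fin p → ℝ) →L[ℝ] (Fin p → ℝ))).hasFDerivAt
  have hF := ((((HasFDerivAt.fun_sum (u := Finset.univ) fun α _ =>
    HasFDerivAt.fun_sum (u := Finset.univ) fun β _ =>
    HasFDerivAt.fun_sum (u := Finset.univ) fun i _ =>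
    HasFDerivAt.fun_sum (u := Finset.univ) fun j _ =>
      ((hv i α).const_mul (a α β * G i j)).mul (hv j β)).const_mul (1 / 2)).sub
    (HasFDerivAt.fun_sum (u := Finset.univ) fun α _ =>
    HasFDerivAt.fun_sum (u := Finset.univ) fun β _ =>
    HasFDerivAt.fun_sum (u := Finset.univ) fun i _ =>
    HasFDerivAt.fun_sum (u := Finset.univ) fun j _ =>
      ((hv i α).const_mul (a α β * G i j)).mul_const (Y j β))).add_const c).mul_const S
  refine (congrArg (fun l => l (Pi.single k (Pi.single γ 1))) hF.fderiv).trans ?_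
  have hs : ∀ i α, (Pi.single k (Pi.single γ 1) : Fin n → Fin p → ℝ) i α =
      if i = k then (if α = γ then 1 else 0) else 0 := by
    intro i α
    by_cases hi : i = k
    · subst hi; simp [Pi.single_apply]
    · simp [hi]
  simp only [smul_apply, sub_apply, add_apply, sum_apply, smul_eq_mul,
    ContinuousLinearMap.comp_apply, ContinuousLinearMap.proj_apply, hs]
  simp only [mul_ite, mul_one, mul_zero, Finset.sum_add_distrib, Finset.sum_ite_eq',
    Finset.mem_univ, if_true, Finset.sum_ite_irrel, Finset.sum_const_zero]
  simp only [← Finset.sum_add_distrib, ← Finset.sum_sub_distrib, Finset.mul_sum]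
  refine Finset.sum_congr rfl fun β _ => Finset.sum_congr rfl fun j _ => ?_
  rw [ha β γ, hG j k]
  ring

/-! ### Lowering indices and the algebraic identity -/

/-- Lowered Christoffel symbols: `g_{ki} G^i_{jl} = ½(∂_l g_{kj} + ∂_j g_{kl} - ∂_k g_{jl})`. -/
theorem sum_mul_christoffel {n : ℕ} (g : (Fin n → ℝ) → Fin n → Fin n → ℝ) (q : Fin n → ℝ)
    (gdet : (Matrix.of (g q)).det ≠ 0) (k j l : Fin n) :
    ∑ i, g q k i * christoffel g i j l q =
      (1 / 2) * (pd l (fun y => g y k j) q + pd j (fun y => g y k l) q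
        - pd k (fun y => g y j l) q) := by
  have h1 : ∑ i, g q k i * christoffel g i j l q =
      (1 / 2) * ∑ m, (∑ i, g q k i * minv (g q) i m) *
        (pd l (fun y => g y m j) q + pd j (fun y => g y m l) q - pd m (fun y => g y j l) q) := by
    simp only [christoffel, Finset.mul_sum, Finset.sum_mul]
    rw [Finset.sum_comm]
    exact Finset.sum_congr rfl fun m _ => Finset.sum_congr rfl fun i _ => by ring
  rw [h1]
  simp [mul_minv _ gdet]

theorem sum_mul_minv_contract {n : ℕ} (G : Fin n → Fin n → ℝ) (hG : (Matrix.of G).det ≠ 0)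
    (b : Fin n → ℝ) (k : Fin n) : ∑ i, G k i * ∑ j, minv G i j * b j = b k := by
  have h1 : ∑ i, G k i * ∑ j, minv G i j * b j = ∑ j, (∑ i, G k i * minv G i j) * b j := by
    simp only [Finset.mul_sum, Finset.sum_mul]
    rw [Finset.sum_comm]
    exact Finset.sum_congr rfl fun m _ => Finset.sum_congr rfl fun i _ => by ring
  rw [h1]
  simp [mul_minv _ hG]

theorem sum_minv_mul_contract {n : ℕ} (G : Fin n → Fin n → ℝ) (hG : (Matrix.of G).det ≠ 0)
    (b : Fin n → ℝ) (k : Fin n) : ∑ i, minv G k i * ∑ j, G i j * b j = b k := by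
  have h1 : ∑ i, minv G k i * ∑ j, G i j * b j = ∑ j, (∑ i, minv G k i * G i j) * b j := by
    simp only [Finset.mul_sum, Finset.sum_mul]
    rw [Finset.sum_comm]
    exact Finset.sum_congr rfl fun m _ => Finset.sum_congr rfl fun i _ => by ring
  rw [h1]
  simp [minv_mul _ hG]

/-- `g_{ki} ∇_m X^i_β` with the Christoffel symbols expanded. -/
theorem sum_mul_nablaX {p n : ℕ} (g : (Fin n → ℝ) → Fin n → Fin n → ℝ)
    (X : Fin n → Fin p → (Fin p → ℝ) → (Fin n → ℝ) → ℝ) (t : Fin p → ℝ) (q : Fin n → ℝ)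
    (gdet : (Matrix.of (g q)).det ≠ 0) (k m : Fin n) (β : Fin p) :
    ∑ i, g q k i * nablaX g X m i β t q =
      ∑ s, (g q k s * pd m (fun y => X s β t y) q + (1 / 2) * (pd s (fun y => g y k m) q +
        pd m (fun y => g y k s) q - pd k (fun y => g y m s) q) * X s β t q) := by
  simp only [← sum_mul_christoffel g q gdet, nablaX, mul_add, Finset.sum_add_distrib]
  congr 1
  simp only [Finset.mul_sum, Finset.sum_mul]
  rw [Finset.sum_comm]
  exact Finset.sum_congr rfl fun m _ => Finset.sum_congr rfl fun i _ => by ring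

/-- Lowered force term: `g_{ki}(∇_m X^i_β - g_{mj} g^{il} ∇_l X^j_β)` equals the curl-like
expression `∂_m(g_{ks} X^s_β) - ∂_k(g_{ms} X^s_β)`. -/
theorem sum_mul_force {p n : ℕ} (g : (Fin n → ℝ) → Fin n → Fin n → ℝ)
    (gsymm : ∀ q i j, g q i j = g q j i)
    (X : Fin n → Fin p → (Fin p → ℝ) → (Fin n → ℝ) → ℝ) (t : Fin p → ℝ) (q : Fin n → ℝ)
    (gdet : (Matrix.of (g q)).det ≠ 0) (k m : Fin n) (β : Fin p) :
    ∑ i, g q k i * (nablaX g X m i β t q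
        - ∑ j, ∑ l, g q m j * minv (g q) i l * nablaX g X l j β t q) =
      ∑ s, ((g q k s * pd m (fun y => X s β t y) q + pd m (fun y => g y k s) q * X s β t q)
        - (g q m s * pd k (fun y => X s β t y) q + pd k (fun y => g y m s) q * X s β t q)) := by
  have h1 : ∑ i, g q k i * ∑ j, ∑ l, g q m j * minv (g q) i l * nablaX g X l j β t q =
      ∑ j, g q m j * nablaX g X k j β t q := by
    rw [← sum_mul_minv_contract (g q) gdet (fun l => ∑ j, g q m j * nablaX g X l j β t q) k]
    refine Finset.sum_congr rfl fun i _ => ?_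
    congr 1
    rw [Finset.sum_comm]
    refine Finset.sum_congr rfl fun l _ => ?_
    rw [Finset.mul_sum]
    exact Finset.sum_congr rfl fun j _ => by ring
  simp only [mul_sub, Finset.sum_sub_distrib, h1, sum_mul_nablaX g X t q gdet]
  simp only [← Finset.sum_sub_distrib]
  refine Finset.sum_congr rfl fun s _ => ?_
  simp only [gsymm _ m k]
  ring

/-- Lowered covariant Hessian. -/
theorem sum_mul_covHess {p n : ℕ} (h : (Fin p → ℝ) → Fin p → Fin p → ℝ)
    (g : (Fin n → ℝ) → Fin n → Fin n → ℝ) (x : (Fin p → ℝ) → Fin n → ℝ) (t : Fin p → ℝ)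
    (gdet : (Matrix.of (g (x t))).det ≠ 0) (k : Fin n) (α β : Fin p) :
    ∑ i, g (x t) k i * covHess h g x i α β t =
      ∑ i, g (x t) k i * pd α (fun s => jet x s i β) t
        - ∑ γ, christoffel h γ α β t * ∑ i, g (x t) k i * jet x t i γ
        + ∑ j, ∑ l, (1 / 2) * (pd l (fun y => g y k j) (x t) + pd j (fun y => g y k l) (x t)
          - pd k (fun y => g y j l) (x t)) * jet x t j α * jet x t l β := by
  simp only [← sum_mul_christoffel g (x t) gdet, covHess, mul_add, mul_sub,
    Finset.sum_add_distrib, Finset.sum_sub_distrib]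
  congr 1
  · congr 1
    simp only [Finset.mul_sum]
    rw [Finset.sum_comm]
    exact Finset.sum_congr rfl fun m _ => Finset.sum_congr rfl fun i _ => by ring
  · simp only [Finset.mul_sum, Finset.sum_mul]
    rw [Finset.sum_comm]
    refine Finset.sum_congr rfl fun j _ => ?_
    rw [Finset.sum_comm]
    exact Finset.sum_congr rfl fun m _ => Finset.sum_congr rfl fun i _ => by ring

/-- Index bookkeeping behind the Euler–Lagrange computation. The arrays stand for
`a = h⁻¹`, `G = g`, `D l i j = ∂_l g_{ij}`, `v = x^i_α`, `w i α β = ∂_α x^i_β`, `Y = X^i_α`,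
`Yx l i β = ∂_l X^i_β`, `Yt α i β = ∂_α X^i_β`, `H` the Christoffel symbols of `h`,
`dc = ∂_k c` and `S = √|det h|`. -/
theorem euler_lagrange_algebra {p n : ℕ} (a : Fin p → Fin p → ℝ) (ha : ∀ α β, a α β = a β α)
    (G : Fin n → Fin n → ℝ) (D : Fin n → Fin n → Fin n → ℝ)
    (v Y : Fin n → Fin p → ℝ) (w : Fin n → Fin p → Fin p → ℝ) (Yx : Fin n → Fin n → Fin p → ℝ)
    (Yt : Fin p → Fin n → Fin p → ℝ) (H : Fin p → Fin p → Fin p → ℝ) (dc S : ℝ) (k : Fin n) :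
    ((1 / 2) * (∑ α, ∑ β, ∑ i, ∑ j, a α β * D k i j * v i α * v j β)
        - (∑ α, ∑ β, ∑ i, ∑ j, a α β * v i α * (D k i j * Y j β + G i j * Yx k j β)) + dc) * S
      - ((∑ β, -(S * ∑ α, ∑ γ, a α γ * H β α γ) * ∑ j, G k j * (v j β - Y j β))
        + ∑ α, ∑ β, S * a α β * ∑ j, ((∑ l, D l k j * v l α) * (v j β - Y j β)
          + G k j * (w j α β - (Yt α j β + ∑ l, Yx l j β * v l α)))) =
    S * (dc + (∑ α, ∑ β, a α β * ∑ m, (∑ s, ((G k s * Yx m s β + D m k s * Y s β)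
          - (G m s * Yx k s β + D k m s * Y s β))) * v m α)
        + (∑ α, ∑ β, a α β * (∑ i, G k i * (Yt α i β - ∑ γ, H γ α β * Y i γ)))
        - ∑ α, ∑ β, a α β * (∑ i, G k i * w i α β - ∑ γ, H γ α β * ∑ i, G k i * v i γ
          + ∑ j, ∑ l, (1 / 2) * (D l k j + D j k l - D k j l) * v j α * v l β)) := by
  have e1 : ∑ β, -(S * ∑ α, ∑ γ, a α γ * H β α γ) * ∑ j, G k j * (v j β - Y j β) =
      -(S * ∑ α, ∑ β, a α β * ∑ γ, H γ α β * ∑ j, G k j * (v j γ - Y j γ)) := by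
    have gen : ∀ W : Fin p → ℝ, ∑ β, -(S * ∑ α, ∑ γ, a α γ * H β α γ) * W β =
        -(S * ∑ α, ∑ β, a α β * ∑ γ, H γ α β * W γ) := by
      intro W
      simp only [neg_mul, Finset.sum_neg_distrib, Finset.mul_sum, Finset.sum_mul]
      rw [Finset.sum_comm]
      congr 1
      refine Finset.sum_congr rfl fun α _ => ?_
      rw [Finset.sum_comm]
      exact Finset.sum_congr rfl fun m _ => Finset.sum_congr rfl fun i _ => by ring
    exact gen _
  -- The part of the Christoffel contraction antisymmetric in `α, β` is killed by `a`.
  have e2 : ∑ α, ∑ β, a α β * ∑ j, ∑ l, D l k j * v j α * v l β =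
      ∑ α, ∑ β, a α β * ∑ j, ∑ l, D j k l * v j α * v l β := by
    rw [Finset.sum_comm]
    refine Finset.sum_congr rfl fun α _ => Finset.sum_congr rfl fun β _ => ?_
    rw [ha β α, Finset.sum_comm]
    congr 1
    exact Finset.sum_congr rfl fun m _ => Finset.sum_congr rfl fun i _ => by ring
  have e3 : ∀ α β, (1 / 2) * (∑ i, ∑ j, D k i j * v i α * v j β)
        - (∑ i, ∑ j, v i α * (D k i j * Y j β + G i j * Yx k j β))
        + (∑ γ, H γ α β * ∑ j, G k j * (v j γ - Y j γ))
        - ∑ j, ((∑ l, D l k j * v l α) * (v j β - Y j β)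
          + G k j * (w j α β - (Yt α j β + ∑ l, Yx l j β * v l α))) =
      (∑ m, (∑ s, ((G k s * Yx m s β + D m k s * Y s β)
          - (G m s * Yx k s β + D k m s * Y s β))) * v m α)
        + (∑ i, G k i * (Yt α i β - ∑ γ, H γ α β * Y i γ))
        - (∑ i, G k i * w i α β - ∑ γ, H γ α β * ∑ i, G k i * v i γ
          + ∑ j, ∑ l, (1 / 2) * (D l k j + D j k l - D k j l) * v j α * v l β)
        + (1 / 2) * ((∑ j, ∑ l, D l k j * v j α * v l β)
          - ∑ j, ∑ l, D j k l * v j α * v l β) := by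
    intro α β
    have f1 : ∑ j, ((∑ l, D l k j * v l α) * (v j β - Y j β)
          + G k j * (w j α β - (Yt α j β + ∑ l, Yx l j β * v l α))) =
        (∑ j, ∑ l, D j k l * v j α * v l β) - (∑ m, ∑ s, D m k s * Y s β * v m α)
          + (∑ i, G k i * w i α β) - (∑ i, G k i * Yt α i β)
          - ∑ m, ∑ s, G k s * Yx m s β * v m α := by
      rw [Finset.sum_comm (f := fun j l => D j k l * v j α * v l β),
        Finset.sum_comm (f := fun m s => D m k s * Y s β * v m α),
        Finset.sum_comm (f := fun m s => G k s * Yx m s β * v m α)]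
      simp only [← Finset.sum_add_distrib, ← Finset.sum_sub_distrib]
      refine Finset.sum_congr rfl fun j _ => ?_
      simp only [mul_assoc, ← Finset.mul_sum]
      have h1 : ∑ l, D l k j * (Y j β * v l α) = (∑ l, D l k j * v l α) * Y j β := by
        rw [Finset.sum_mul]
        exact Finset.sum_congr rfl fun l _ => by ring
      have h2 : ∑ l, D l k j * (v l α * v j β) = (∑ l, D l k j * v l α) * v j β := by
        rw [Finset.sum_mul]
        exact Finset.sum_congr rfl fun l _ => by ring
      rw [Finset.sum_sub_distrib, h1, h2]
      ring
    have f2 : ∑ m, (∑ s, ((G k s * Yx m s β + D m k s * Y s β)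
          - (G m s * Yx k s β + D k m s * Y s β))) * v m α =
        (∑ m, ∑ s, G k s * Yx m s β * v m α) + (∑ m, ∑ s, D m k s * Y s β * v m α)
          - ∑ i, ∑ j, v i α * (D k i j * Y j β + G i j * Yx k j β) := by
      simp only [← Finset.sum_add_distrib, ← Finset.sum_sub_distrib, Finset.sum_mul]
      exact Finset.sum_congr rfl fun m _ => Finset.sum_congr rfl fun i _ => by ring
    have f3 : ∑ i, G k i * (Yt α i β - ∑ γ, H γ α β * Y i γ) =
        (∑ i, G k i * Yt α i β) - ∑ γ, H γ α β * ∑ i, G k i * Y i γ := by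
      simp only [mul_sub, Finset.sum_sub_distrib, Finset.mul_sum]
      congr 1
      rw [Finset.sum_comm]
      exact Finset.sum_congr rfl fun m _ => Finset.sum_congr rfl fun i _ => by ring
    have f4 : ∑ γ, H γ α β * ∑ j, G k j * (v j γ - Y j γ) =
        (∑ γ, H γ α β * ∑ i, G k i * v i γ) - ∑ γ, H γ α β * ∑ i, G k i * Y i γ := by
      simp only [mul_sub, Finset.sum_sub_distrib]
    have f5 : ∑ j, ∑ l, (1 / 2) * (D l k j + D j k l - D k j l) * v j α * v l β =
        (1 / 2) * ((∑ j, ∑ l, D l k j * v j α * v l β) + (∑ j, ∑ l, D j k l * v j α * v l β)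
          - ∑ i, ∑ j, D k i j * v i α * v j β) := by
      simp only [← Finset.sum_add_distrib, ← Finset.sum_sub_distrib, Finset.mul_sum]
      exact Finset.sum_congr rfl fun m _ => Finset.sum_congr rfl fun i _ => by ring
    rw [f1, f2, f3, f4, f5]
    ring
  have e4 := Finset.sum_congr rfl fun α (_ : α ∈ Finset.univ) =>
    Finset.sum_congr rfl fun β (_ : β ∈ Finset.univ) => congrArg (a α β * ·) (e3 α β)
  have e5 : ∑ α, ∑ β, ∑ i, ∑ j, a α β * D k i j * v i α * v j β =
      ∑ α, ∑ β, a α β * ∑ i, ∑ j, D k i j * v i α * v j β := by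
    simp only [Finset.mul_sum, mul_assoc]
  have e6 : ∑ α, ∑ β, ∑ i, ∑ j, a α β * v i α * (D k i j * Y j β + G i j * Yx k j β) =
      ∑ α, ∑ β, a α β * ∑ i, ∑ j, v i α * (D k i j * Y j β + G i j * Yx k j β) := by
    simp only [Finset.mul_sum, mul_assoc]
  rw [e1, e5, e6]
  simp only [mul_add (a _ _), mul_sub (a _ _), mul_left_comm (a _ _) (1 / 2),
    Finset.sum_add_distrib, Finset.sum_sub_distrib, ← Finset.mul_sum, mul_assoc S] at e4 e2 ⊢
  linear_combination S * e4 + S / 2 * e2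

/-! ### Assembling the Euler–Lagrange equations -/

theorem differentiable_jet {p n : ℕ} (x : (Fin p → ℝ) → Fin n → ℝ) (hx : ContDiff ℝ (⊤ : ℕ∞) x)
    (i : Fin n) (β : Fin p) : Differentiable ℝ (fun s => jet x s i β) := by
  have h1 : ContDiff ℝ (⊤ : ℕ∞) (fun s => x s i) := (contDiff_pi.mp hx) i
  have h2 : ContDiff ℝ 1 (fderiv ℝ (fun s => x s i)) := h1.fderiv_right (by norm_cast)
  exact (h2.clm_apply contDiff_const).differentiable one_ne_zero

/-- Divergence of `√|det h| h^{αβ} W_β` for a differentiable covector field `W` on `ℝ^p`; the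
momenta `∂L/∂x^k_α` along the jet of `x` have this form. -/
theorem sum_pd_momentum {p : ℕ} (h : (Fin p → ℝ) → Fin p → Fin p → ℝ) (t : Fin p → ℝ)
    (hsymm : ∀ t α β, h t α β = h t β α)
    (hh : ∀ α β, DifferentiableAt ℝ (fun s => h s α β) t)
    (hdet : ∀ t, (Matrix.of (h t)).det ≠ 0) (W : Fin p → (Fin p → ℝ) → ℝ)
    (hW : ∀ β, DifferentiableAt ℝ (W β) t) :
    ∑ α, pd α (fun s => ∑ β, (sqrtDet h s * minv (h s) α β) * W β s) t =
      (∑ β, -(sqrtDet h t * ∑ α, ∑ γ, minv (h t) α γ * christoffel h β α γ t) * W β t)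
        + ∑ α, ∑ β, sqrtDet h t * minv (h t) α β * pd α (W β) t := by
  have hSm : ∀ α β, DifferentiableAt ℝ (fun s => sqrtDet h s * minv (h s) α β) t := fun α β =>
    (pd_sqrtDet h t hh (hdet t)).1.mul (differentiableAt_minv h t hh (hdet t) α β)
  have h1 : ∀ α, pd α (fun s => ∑ β, (sqrtDet h s * minv (h s) α β) * W β s) t =
      (∑ β, pd α (fun s => sqrtDet h s * minv (h s) α β) t * W β t)
        + ∑ β, sqrtDet h t * minv (h t) α β * pd α (W β) t := by
    intro α
    rw [pd_sum fun β _ => (hSm α β).fun_mul (hW β), ← Finset.sum_add_distrib]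
    exact Finset.sum_congr rfl fun β _ => pd_mul (hSm α β) (hW β)
  simp only [h1, Finset.sum_add_distrib]
  congr 1
  rw [Finset.sum_comm]
  refine Finset.sum_congr rfl fun β _ => ?_
  rw [← Finset.sum_mul, sum_pd_sqrtDet_mul_minv h t hsymm hh hdet]

/-- extremals of the general energy Lagrangian are exactly the solutions of
the generalized Poisson (potential map) equations. -/
theorem potential_iff_extremal_of_general_energy
    {p n : ℕ} (hp : 0 < p) (hn : 0 < n)
    (h : (Fin p → ℝ) → Fin p → Fin p → ℝ)
    (hsymm : ∀ t α β, h t α β = h t β α)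
    (hsmooth : ∀ α β, ContDiff ℝ (⊤ : ℕ∞) fun t => h t α β)
    (hdet : ∀ t, (Matrix.of (h t)).det ≠ 0)
    (g : (Fin n → ℝ) → Fin n → Fin n → ℝ)
    (gsymm : ∀ q i j, g q i j = g q j i)
    (gsmooth : ∀ i j, ContDiff ℝ (⊤ : ℕ∞) fun q => g q i j)
    (gdet : ∀ q, (Matrix.of (g q)).det ≠ 0)
    (X : Fin n → Fin p → (Fin p → ℝ) → (Fin n → ℝ) → ℝ)
    (Xsmooth : ∀ i α, ContDiff ℝ (⊤ : ℕ∞) fun z : (Fin p → ℝ) × (Fin n → ℝ) => X i α z.1 z.2)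
    (c : (Fin p → ℝ) → (Fin n → ℝ) → ℝ)
    (csmooth : ContDiff ℝ (⊤ : ℕ∞) fun z : (Fin p → ℝ) × (Fin n → ℝ) => c z.1 z.2)
    (x : (Fin p → ℝ) → Fin n → ℝ) (hx : ContDiff ℝ (⊤ : ℕ∞) x) :
    IsExtremal
      (fun t q v =>
        ((1 / 2) * (∑ α, ∑ β, ∑ i, ∑ j, minv (h t) α β * g q i j * v i α * v j β)
          - (∑ α, ∑ β, ∑ i, ∑ j, minv (h t) α β * g q i j * v i α * X j β t q)
          + c t q) * sqrtDet h t) x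
      ↔ ∀ (t : Fin p → ℝ) (i : Fin n),
          ∑ α, ∑ β, minv (h t) α β * covHess h g x i α β t
            = (∑ j, minv (g (x t)) i j * pd j (fun y => c t y) (x t))
              + (∑ α, ∑ β, ∑ k, minv (h t) α β
                  * (nablaX g X k i β t (x t)
                      - ∑ j, ∑ l, g (x t) k j * minv (g (x t)) i l
                          * nablaX g X l j β t (x t))
                  * jet x t k α)
              + (∑ α, ∑ β, minv (h t) α β * Dt h X α i β t (x t)) := by
  have hh : ∀ t α β, DifferentiableAt ℝ (fun s => h s α β) t := fun t α β =>
    ((hsmooth α β).differentiable (by simp)) t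
  have hg : ∀ q i j, DifferentiableAt ℝ (fun s => g s i j) q := fun q i j =>
    ((gsmooth i j).differentiable (by simp)) q
  have hX : ∀ i α z, DifferentiableAt ℝ
      (fun z : (Fin p → ℝ) × (Fin n → ℝ) => X i α z.1 z.2) z := fun i α z =>
    ((Xsmooth i α).differentiable (by simp)) z
  have hc : ∀ z, DifferentiableAt ℝ (fun z : (Fin p → ℝ) × (Fin n → ℝ) => c z.1 z.2) z :=
    fun z => (csmooth.differentiable (by simp)) z
  have hxd : Differentiable ℝ x := hx.differentiable (by simp)
  have hXq : ∀ i α t q, DifferentiableAt ℝ (fun y => X i α t y) q := fun i α t q =>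
    DifferentiableAt.comp (f := fun y => (t, y)) q (hX i α (t, q)) (by fun_prop)
  have hcq : ∀ t q, DifferentiableAt ℝ (fun y => c t y) q := fun t q =>
    DifferentiableAt.comp (f := fun y => (t, y)) q (hc (t, q)) (by fun_prop)
  have hXx : ∀ i α t, DifferentiableAt ℝ (fun s => X i α s (x s)) t := fun i α t =>
    DifferentiableAt.comp (f := fun s => (s, x s)) t (hX i α (t, x t))
      (differentiableAt_id.prodMk (hxd t))
  have hgx : ∀ i j t, DifferentiableAt ℝ (fun s => g (x s) i j) t := fun i j t =>
    DifferentiableAt.comp (f := x) t (hg (x t) i j) (hxd t)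
  have hj := differentiable_jet x hx
  -- Chain rules for the coefficients restricted to the graph of `x`.
  have cg : ∀ i j t α, pd α (fun s => g (x s) i j) t =
      ∑ l, pd l (fun y => g y i j) (x t) * jet x t l α := by
    intro i j t α
    have := pd_graph (fun _ q => g q i j) x t
      (DifferentiableAt.comp (f := Prod.snd) (t, x t) (hg (x t) i j) differentiableAt_snd) (hxd t) α
    rw [this]
    simp [pd]
  have cX : ∀ j β t α, pd α (fun s => X j β s (x s)) t = pd α (fun s => X j β s (x t)) t +
      ∑ l, pd l (fun y => X j β t y) (x t) * jet x t l α := fun j β t α =>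
    pd_graph (X j β) x t (hX j β (t, x t)) (hxd t) α
  have hW : ∀ k β t, DifferentiableAt ℝ
      (fun s => ∑ j, g (x s) k j * (jet x s j β - X j β s (x s))) t := fun k β t =>
    DifferentiableAt.fun_sum fun j _ => (hgx k j t).fun_mul ((hj j β t).fun_sub (hXx j β t))
  have pW : ∀ k β t α, pd α (fun s => ∑ j, g (x s) k j * (jet x s j β - X j β s (x s))) t =
      ∑ j, ((∑ l, pd l (fun y => g y k j) (x t) * jet x t l α) * (jet x t j β - X j β t (x t))
        + g (x t) k j * (pd α (fun s => jet x s j β) t - (pd α (fun s => X j β s (x t)) t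
          + ∑ l, pd l (fun y => X j β t y) (x t) * jet x t l α))) := by
    intro k β t α
    rw [pd_sum fun j _ => (hgx k j t).fun_mul ((hj j β t).fun_sub (hXx j β t))]
    refine Finset.sum_congr rfl fun j _ => ?_
    rw [pd_mul (hgx k j t) ((hj j β t).fun_sub (hXx j β t)), pd_sub (hj j β t) (hXx j β t), cg, cX]
  -- The Euler–Lagrange expression is the lowered, densitized Poisson equation.
  have key : ∀ t k,
      fderiv ℝ (fun q =>
        ((1 / 2) * (∑ α, ∑ β, ∑ i, ∑ j, minv (h t) α β * g q i j * jet x t i α * jet x t j β)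
          - (∑ α, ∑ β, ∑ i, ∑ j, minv (h t) α β * g q i j * jet x t i α * X j β t q)
          + c t q) * sqrtDet h t) (x t) (Pi.single k 1)
      - (∑ α, pd α
          (fun s => fderiv ℝ (fun v : Fin n → Fin p → ℝ =>
            ((1 / 2) * (∑ α, ∑ β, ∑ i, ∑ j, minv (h s) α β * g (x s) i j * v i α * v j β)
              - (∑ α, ∑ β, ∑ i, ∑ j, minv (h s) α β * g (x s) i j * v i α * X j β s (x s))
              + c s (x s)) * sqrtDet h s) (jet x s)
            (Pi.single k (Pi.single α 1))) t) =
      sqrtDet h t * ∑ i, g (x t) k i *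
        (((∑ j, minv (g (x t)) i j * pd j (fun y => c t y) (x t))
              + (∑ α, ∑ β, ∑ k, minv (h t) α β
                  * (nablaX g X k i β t (x t)
                      - ∑ j, ∑ l, g (x t) k j * minv (g (x t)) i l
                          * nablaX g X l j β t (x t))
                  * jet x t k α)
              + (∑ α, ∑ β, minv (h t) α β * Dt h X α i β t (x t)))
          - ∑ α, ∑ β, minv (h t) α β * covHess h g x i α β t) := by
    intro t k
    have hq := pd_lagrangian (minv (h t)) (jet x t) (sqrtDet h t) (fun i j q => g q i j)
      (fun j β q => X j β t q) (fun q => c t q) (x t) (hg (x t)) (fun i α => hXq i α t (x t))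
      (hcq t (x t)) k
    rw [pd] at hq
    rw [hq]
    simp only [fderiv_lagrangian_jet _ _ (minv_symm _ (hsymm _)) (gsymm _)]
    rw [sum_pd_momentum h t hsymm (hh t) hdet
      (fun β s => ∑ j, g (x s) k j * (jet x s j β - X j β s (x s))) (fun β => hW k β t)]
    simp only [pW]
    rw [euler_lagrange_algebra (minv (h t)) (minv_symm _ (hsymm t)) (g (x t))
      (fun l i j => pd l (fun y => g y i j) (x t)) (jet x t) (fun j β => X j β t (x t))
      (fun j α β => pd α (fun s => jet x s j β) t)
      (fun l j β => pd l (fun y => X j β t y) (x t))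
      (fun α j β => pd α (fun s => X j β s (x t)) t) (fun γ α β => christoffel h γ α β t)]
    congr 1
    have pull : ∀ T : Fin n → Fin p → Fin p → ℝ,
        ∑ i, g (x t) k i * ∑ α, ∑ β, minv (h t) α β * T i α β =
          ∑ α, ∑ β, minv (h t) α β * ∑ i, g (x t) k i * T i α β := by
      intro T
      simp only [Finset.mul_sum]
      rw [Finset.sum_comm]
      refine Finset.sum_congr rfl fun α _ => ?_
      rw [Finset.sum_comm]
      exact Finset.sum_congr rfl fun β _ => Finset.sum_congr rfl fun i _ => by ring
    have force : ∀ i, (∑ α, ∑ β, ∑ m, minv (h t) α β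
          * (nablaX g X m i β t (x t) - ∑ j, ∑ l, g (x t) m j * minv (g (x t)) i l
            * nablaX g X l j β t (x t)) * jet x t m α) =
        ∑ α, ∑ β, minv (h t) α β * ∑ m, (nablaX g X m i β t (x t)
          - ∑ j, ∑ l, g (x t) m j * minv (g (x t)) i l * nablaX g X l j β t (x t))
            * jet x t m α := by
      intro i
      refine Finset.sum_congr rfl fun α _ => Finset.sum_congr rfl fun β _ => ?_
      rw [Finset.mul_sum]
      exact Finset.sum_congr rfl fun m _ => mul_assoc _ _ _
    have lower : ∀ α β, ∑ i, g (x t) k i * ∑ m, (nablaX g X m i β t (x t)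
          - ∑ j, ∑ l, g (x t) m j * minv (g (x t)) i l * nablaX g X l j β t (x t))
            * jet x t m α =
        ∑ m, (∑ i, g (x t) k i * (nablaX g X m i β t (x t)
          - ∑ j, ∑ l, g (x t) m j * minv (g (x t)) i l * nablaX g X l j β t (x t)))
            * jet x t m α := by
      intro α β
      simp only [Finset.sum_mul]
      rw [Finset.sum_comm]
      refine Finset.sum_congr rfl fun i _ => ?_
      rw [Finset.mul_sum]
      exact Finset.sum_congr rfl fun m _ => (mul_assoc _ _ _).symm
    have split : ∀ A B C E : Fin n → ℝ, ∑ i, g (x t) k i * ((A i + B i + C i) - E i) =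
        ∑ i, g (x t) k i * A i + ∑ i, g (x t) k i * B i + ∑ i, g (x t) k i * C i
          - ∑ i, g (x t) k i * E i := by
      intro A B C E
      simp only [mul_add, mul_sub, Finset.sum_add_distrib, Finset.sum_sub_distrib]
    rw [split, sum_mul_minv_contract _ (gdet (x t))]
    simp only [force, pull, lower, sum_mul_force g gsymm X t (x t) (gdet (x t)),
      sum_mul_covHess h g x t (gdet (x t)), Dt]
  have hpos : ∀ t, sqrtDet h t ≠ 0 := fun t => (sqrtDet_pos h t (hdet t)).ne'
  constructor
  · intro hE t i
    have h1 := fun k => (mul_eq_zero.mp ((key t k).symm.trans (hE t k))).resolve_left (hpos t)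
    have h2 := sum_minv_mul_contract (g (x t)) (gdet (x t)) (fun i =>
      ((∑ j, minv (g (x t)) i j * pd j (fun y => c t y) (x t))
          + (∑ α, ∑ β, ∑ k, minv (h t) α β
              * (nablaX g X k i β t (x t)
                  - ∑ j, ∑ l, g (x t) k j * minv (g (x t)) i l
                      * nablaX g X l j β t (x t))
              * jet x t k α)
          + (∑ α, ∑ β, minv (h t) α β * Dt h X α i β t (x t)))
        - ∑ α, ∑ β, minv (h t) α β * covHess h g x i α β t) i
    simp only [h1, mul_zero, Finset.sum_const_zero] at h2
    exact (sub_eq_zero.mp h2.symm).symm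
  · intro hE t k
    refine (key t k).trans ?_
    simp [hE t]
end
end

section
/- (Potential maps / Lorentz–Udriste world-force law.) Let X^i_α : ℝ^p × ℝ^n → ℝ be smooth. Every smooth solution x : ℝ^p → ℝ^n of the first-order PDEs system x^i_α(t) = X^i_α(t, x(t)) is an extremal of the Lagrangian L = ½ h^{αβ} g_{ij} (x^i_α − X^i_α)(x^j_β − X^j_β) √|det h|, i.e. it satisfies the Euler–Lagrange equations of L. -/
/-!
The Lagrangian is a quadratic form in the deviations `x^i_α - X^i_α(t, x)`, and along a solution
every deviation vanishes. Hence `L` vanishes to second order at each point of the first jet of `x`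
(`fderiv_quadratic_eq_zero`), so both `∂L/∂x^k` and `∂L/∂x^k_α` are identically zero along the
jet, and so is the total derivative of the latter.
-/

open scoped BigOperators

noncomputable section

/-- A finite sum of terms `c · u · w` whose factors `u` and `w` both vanish at `y₀` vanishes to
second order there, so its derivative at `y₀` is zero. -/
lemma fderiv_quadratic_eq_zero {E : Type*} [NormedAddCommGroup E] [NormedSpace ℝ E]
    {p n : ℕ} (y₀ : E) (a : Fin p → Fin p → ℝ) (s : ℝ)
    (c : Fin n → Fin n → E → ℝ) (u : Fin n → Fin p → E → ℝ)
    (hc : ∀ i j, DifferentiableAt ℝ (c i j) y₀)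
    (hu : ∀ i α, DifferentiableAt ℝ (u i α) y₀)
    (hu₀ : ∀ i α, u i α y₀ = 0) :
    fderiv ℝ (fun y => (1 / 2) * (∑ α, ∑ β, ∑ i, ∑ j,
      a α β * c i j y * u i α y * u j β y) * s) y₀ = 0 := by
  have key : ∀ α β i j,
      HasFDerivAt (fun y => a α β * c i j y * u i α y * u j β y) (0 : E →L[ℝ] ℝ) y₀ := by
    intro α β i j
    have hprod := (((hc i j).hasFDerivAt.const_mul (a α β)).mul (hu i α).hasFDerivAt).mul
      (hu j β).hasFDerivAt
    refine hprod.congr_fderiv ?_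
    simp [hu₀]
  have hsum : HasFDerivAt (fun y => ∑ α, ∑ β, ∑ i, ∑ j,
      a α β * c i j y * u i α y * u j β y)
      (∑ _α : Fin p, ∑ _β : Fin p, ∑ _i : Fin n, ∑ _j : Fin n, (0 : E →L[ℝ] ℝ)) y₀ :=
    HasFDerivAt.fun_sum fun α _ => HasFDerivAt.fun_sum fun β _ =>
      HasFDerivAt.fun_sum fun i _ => HasFDerivAt.fun_sum fun j _ => key α β i j
  have hfull := (hsum.const_mul (1 / 2 : ℝ)).mul_const s
  rw [hfull.fderiv]
  simp

/-- Lorentz–Udriste world-force law: every solution of the first-order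
system `x^i_α = X^i_α(t, x(t))` is an extremal of
`L = ½ h^{αβ} g_{ij}(x^i_α − X^i_α)(x^j_β − X^j_β)√|det h|`. -/
theorem solution_is_potential_map
    {p n : ℕ} (hp : 0 < p) (hn : 0 < n)
    (h : (Fin p → ℝ) → Fin p → Fin p → ℝ)
    (hsymm : ∀ t α β, h t α β = h t β α)
    (hsmooth : ∀ α β, ContDiff ℝ (⊤ : ℕ∞) fun t => h t α β)
    (hdet : ∀ t, (Matrix.of (h t)).det ≠ 0)
    (g : (Fin n → ℝ) → Fin n → Fin n → ℝ)
    (gsymm : ∀ q i j, g q i j = g q j i)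
    (gsmooth : ∀ i j, ContDiff ℝ (⊤ : ℕ∞) fun q => g q i j)
    (gdet : ∀ q, (Matrix.of (g q)).det ≠ 0)
    (X : Fin n → Fin p → (Fin p → ℝ) → (Fin n → ℝ) → ℝ)
    (Xsmooth : ∀ i α, ContDiff ℝ (⊤ : ℕ∞) fun z : (Fin p → ℝ) × (Fin n → ℝ) => X i α z.1 z.2)
    (x : (Fin p → ℝ) → Fin n → ℝ) (hx : ContDiff ℝ (⊤ : ℕ∞) x)
    (hsol : ∀ (t : Fin p → ℝ) (i : Fin n) (α : Fin p), jet x t i α = X i α t (x t)) :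
    IsExtremal
      (fun t q v =>
        (1 / 2) * (∑ α, ∑ β, ∑ i, ∑ j, minv (h t) α β * g q i j
          * (v i α - X i α t q) * (v j β - X j β t q)) * sqrtDet h t) x := by
  intro t k
  have hL_x : fderiv ℝ (fun q => (1 / 2) * (∑ α, ∑ β, ∑ i, ∑ j, minv (h t) α β * g q i j
      * (jet x t i α - X i α t q) * (jet x t j β - X j β t q)) * sqrtDet h t) (x t) = 0 := by
    refine fderiv_quadratic_eq_zero (x t) (minv (h t)) (sqrtDet h t) (fun i j q => g q i j)
      (fun i α q => jet x t i α - X i α t q) ?_ ?_ ?_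
    · exact fun i j => ((gsmooth i j).differentiable (by simp)).differentiableAt
    · intro i α
      have hX : Differentiable ℝ fun q => X i α t q :=
        ((Xsmooth i α).differentiable (by simp)).comp
          ((differentiable_const t).prodMk differentiable_id)
      exact (hX _).const_sub _
    · intro i α
      simp [hsol]
  have hL_v : ∀ s, fderiv ℝ (fun v : Fin n → Fin p → ℝ =>
      (1 / 2) * (∑ α, ∑ β, ∑ i, ∑ j, minv (h s) α β * g (x s) i j
      * (v i α - X i α s (x s)) * (v j β - X j β s (x s))) * sqrtDet h s) (jet x s) = 0 := by
    intro s
    refine fderiv_quadratic_eq_zero (jet x s) (minv (h s)) (sqrtDet h s)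
      (fun i j _ => g (x s) i j) (fun i α v => v i α - X i α s (x s)) ?_ ?_ ?_
    · exact fun i j => differentiableAt_const _
    · intro i α
      fun_prop
    · intro i α
      simp [hsol]
  simp only [hL_x, hL_v, pd]
  simp
end
end
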